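/- arXiv:0712.0837 — 2 statements merged into one kernel-verified Lean document; each statement's English description precedes it below -/
import Mathlib

section
/- There exists a group homomorphism ρ from SL(2,ℤ) into the group of invertible ℂ-linear endomorphisms of the free ℂ-module E with basis {e_n}_{n∈ℕ⁺} (equivalently, into invertible column-finite ℕ⁺×ℕ⁺ matrices) such that, writing ρ(Y)_{i,j} for the coefficient of e_i in ρ(Y)(e_j): (a) ρ(T) is the divisor matrix, i.e. ρ(T)_{i,j} = 1 if i divides j and 0 otherwise, where T = [[1,1],[0,1]]; (b) ρ(Y)_{i,j} is an integer for every Y ∈ SL(2,ℤ) and all i, j; (c) for every Y ∈ SL(2,ℤ) there exist positive constants C and c with ρ(Y)_{i,j} = 0 whenever i > C·j^c and |ρ(Y)_{i,j}| ≤ C·j^c for all i, j. -/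
/-- The standard unipotent generator `T = [[1,1],[0,1]]` of `SL(2,ℤ)`. -/
def Tgen : Matrix.SpecialLinearGroup (Fin 2) ℤ :=
  ⟨!![1, 1; 0, 1], by norm_num [Matrix.det_fin_two_of]⟩

/-- The `(i,j)` matrix entry of a linear automorphism of the free module `E = ℕ+ →₀ ℂ`
with basis `(e_n)`, i.e. the coefficient of `e_i` in the image of `e_j`. -/
noncomputable def entry (g : (ℕ+ →₀ ℂ) ≃ₗ[ℂ] (ℕ+ →₀ ℂ)) (i j : ℕ+) : ℂ :=
  g (Finsupp.single j 1) i

section Presentation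

lemma pres_normal {G : Type*} [Group G] (s r : G) (h4 : s^4=1) (h6 : r^3 = s^2)
    (x : G) (hx : x ∈ Subgroup.closure ({s, r} : Set G)) :
    ∃ j : ℕ, ∃ w ∈ Submonoid.closure ({s⁻¹*r, s⁻¹*r^2} : Set G), x = r^j*w ∨ x = r^j*w*s := by
  have hr6 : r^6 = 1 := by
    calc r^6 = (r^3)^2 := by group
      _ = s^4 := by rw [h6]; group
      _ = 1 := h4
  have hcs : ∀ w ∈ Submonoid.closure ({s⁻¹*r, s⁻¹*r^2} : Set G), Commute (r^3) w := by
    intro w hw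
    have hs : Commute (r^3) s := by rw [h6]; exact (Commute.refl s).pow_left 2
    have hr : Commute (r^3) r := (Commute.refl r).pow_left 3
    induction hw using Submonoid.closure_induction with
    | mem y hy =>
      rcases hy with rfl | rfl
      · exact hs.inv_right.mul_right hr
      · exact hs.inv_right.mul_right (hr.pow_right 2)
    | one => exact Commute.one_right _
    | mul y z _ _ hy hz => exact hy.mul_right hz
  set W := Submonoid.closure ({s⁻¹*r, s⁻¹*r^2} : Set G) with hW
  have hT : s⁻¹*r ∈ W := Submonoid.subset_closure (by simp)
  have hU : s⁻¹*r^2 ∈ W := Submonoid.subset_closure (by simp)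
  let P : G → Prop := fun x => ∃ j : ℕ, ∃ w ∈ W, x = r^j*w ∨ x = r^j*w*s
  have Ps : ∀ x, P x → P (x*s) := by
    rintro x ⟨j, w, hw, rfl | rfl⟩
    · exact ⟨j, w, hw, Or.inr rfl⟩
    · refine ⟨j+3, w, hw, Or.inl ?_⟩
      calc r^j*w*s*s = r^j*(w*s^2) := by simp only [pow_two, mul_assoc]
        _ = r^j*(r^3*w) := by rw [← h6, (hcs w hw).eq]
        _ = _ := by rw [pow_add]; group
  have Pr : ∀ x, P x → P (x*r) := by
    rintro x ⟨j, w, hw, rfl | rfl⟩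
    · have : w = 1 ∨ ∃ w' ∈ W, w = w'*(s⁻¹*r) ∨ w = w'*(s⁻¹*r^2) := by
        clear hcs
        induction hw using Submonoid.closure_induction_right with
        | one => exact Or.inl rfl
        | mul_right y hy z hz ih =>
          right
          rcases hz with rfl | rfl
          · exact ⟨y, hy, Or.inl rfl⟩
          · exact ⟨y, hy, Or.inr rfl⟩
      rcases this with rfl | ⟨w', hw', rfl | rfl⟩
      · exact ⟨j+1, 1, one_mem _, Or.inl (by rw [pow_succ]; group)⟩
      · refine ⟨j, w'*(s⁻¹*r^2), mul_mem hw' hU, Or.inl ?_⟩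
        simp only [pow_two, mul_assoc]
      · refine ⟨j, w', hw', Or.inr ?_⟩
        calc r^j*(w'*(s⁻¹*r^2))*r = r^j*w'*(s⁻¹*r^3) := by group
          _ = _ := by rw [h6]; group
    · refine ⟨j+3, w*(s⁻¹*r), mul_mem hw hT, Or.inl ?_⟩
      calc r^j*w*s*r = r^j*(w*s^2)*(s⁻¹*r) := by group
        _ = r^j*(r^3*w)*(s⁻¹*r) := by rw [← h6, (hcs w hw).eq]
        _ = _ := by rw [pow_add]; group
  have hsi : s⁻¹ = s*s*s := by
    rw [inv_eq_iff_mul_eq_one]; rw [← h4]; simp only [pow_succ, pow_zero, one_mul, mul_assoc]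
  have hri : r⁻¹ = r*r*r*r*r := by
    rw [inv_eq_iff_mul_eq_one]; rw [← hr6]; simp only [pow_succ, pow_zero, one_mul, mul_assoc]
  change P x
  induction hx using Subgroup.closure_induction_right with
  | one => exact ⟨0, 1, one_mem _, Or.inl (by simp)⟩
  | mul_right y hy z hz ih =>
    rcases hz with rfl | rfl
    · exact Ps _ ih
    · exact Pr _ ih
  | mul_inv_cancel y hy z hz ih =>
    rcases hz with rfl | rfl
    · rw [hsi, ← mul_assoc, ← mul_assoc]; exact Ps _ (Ps _ (Ps _ ih))
    · rw [hri]; simp only [← mul_assoc]; exact Pr _ (Pr _ (Pr _ (Pr _ (Pr _ ih))))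

open ModularGroup in
lemma pres_exists {H : Type*} [Group H] (s d : H) (h4 : s^4=1) (h6 : (s*d)^3 = s^2) :
    ∃ ρ : Matrix.SpecialLinearGroup (Fin 2) ℤ →* H, ρ S = s ∧ ρ T = d := by
  let a : Matrix.SpecialLinearGroup (Fin 2) ℤ × H := (S, s)
  let r : Matrix.SpecialLinearGroup (Fin 2) ℤ × H := (S*T, s*d)
  have ha4 : a^4 = 1 := Prod.ext (by change S^4 = 1; decide) h4
  have hr3 : r^3 = a^2 := Prod.ext (by change (S*T)^3 = S^2; decide) h6
  have hr6 : r^6 = 1 := by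
    calc r^6 = (r^3)^2 := by group
      _ = a^4 := by rw [hr3]; group
      _ = 1 := ha4
  let K := Subgroup.closure ({a, r} : Set (Matrix.SpecialLinearGroup (Fin 2) ℤ × H))
  have haK : a ∈ K := Subgroup.subset_closure (by simp)
  have hrK : r ∈ K := Subgroup.subset_closure (by simp)
  have hbK : ((T, d) : Matrix.SpecialLinearGroup (Fin 2) ℤ × H) ∈ K := by
    have : ((T, d) : Matrix.SpecialLinearGroup (Fin 2) ℤ × H) = a⁻¹*r := by
      apply Prod.ext <;> simp [a, r]
    rw [this]; exact mul_mem (inv_mem haK) hrK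
  let φ : K →* Matrix.SpecialLinearGroup (Fin 2) ℤ := (MonoidHom.fst _ _).comp K.subtype
  have hpos : ∀ w ∈ Submonoid.closure ({a⁻¹*r, a⁻¹*r^2} :
      Set (Matrix.SpecialLinearGroup (Fin 2) ℤ × H)),
      w = 1 ∨ ((0 ≤ w.1.1 0 0 ∧ 0 ≤ w.1.1 0 1 ∧ 0 ≤ w.1.1 1 0 ∧ 0 ≤ w.1.1 1 1) ∧
        3 ≤ w.1.1 0 0 + w.1.1 0 1 + w.1.1 1 0 + w.1.1 1 1) := by
    have e1 : (a⁻¹*r).1.1 = !![1,1;0,1] := by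
      have : (a⁻¹*r).1 = T := by simp [a, r]
      rw [this]; rfl
    have e2 : (a⁻¹*r^2).1.1 = !![1,0;1,1] := by
      have : (a⁻¹*r^2).1 = S⁻¹*(S*T)^2 := rfl
      rw [this]; decide
    intro w hw
    induction hw using Submonoid.closure_induction_right with
    | one => exact Or.inl rfl
    | mul_right y hy z hz ih =>
      right
      have hz' : z.1.1 = !![1,1;0,1] ∨ z.1.1 = !![1,0;1,1] := by
        rcases hz with rfl | rfl
        · exact Or.inl e1
        · exact Or.inr e2
      rcases ih with rfl | ⟨h1, h2⟩
      · rw [one_mul]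
        rcases hz' with h | h <;> rw [h] <;> simp
      · obtain ⟨h00, h01, h10, h11⟩ := h1
        have hm : (y*z).1.1 = y.1.1 * z.1.1 := rfl
        rw [hm]
        rcases hz' with h | h <;> rw [h] <;>
        · simp [Matrix.mul_apply, Fin.sum_univ_two, Fin.forall_fin_two]
          refine ⟨⟨?_, ?_, ?_, ?_⟩, ?_⟩ <;> linarith
  have hinj : Function.Injective φ := by
    rw [injective_iff_map_eq_one]
    rintro ⟨x, hx⟩ h1
    have h1' : x.1 = 1 := h1
    obtain ⟨j, w, hw, hxx⟩ := pres_normal a r ha4 hr3 x hx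
    have key : ∃ i < 6, r^j = r^i ∧ (i = 0 ∨ i = 1 ∨ i = 2 ∨ i = 3 ∨ i = 4 ∨ i = 5) :=
      ⟨j % 6, Nat.mod_lt _ (by norm_num), by conv_lhs => rw [← Nat.mod_add_div j 6, pow_add, pow_mul, hr6, one_pow, mul_one], by omega⟩
    obtain ⟨i, hi, hji, hi6⟩ := key
    rw [hji] at hxx
    apply Subtype.ext
    change x = 1
    rcases hxx with rfl | rfl
    · have hw1 : w.1 = ((S*T)^i)⁻¹ := by
        rw [eq_comm, inv_eq_iff_mul_eq_one]; exact h1'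
      rcases hpos w hw with rfl | ⟨hp, hs⟩
      · have : (S*T)^i = 1 := by
          have : (1 : Matrix.SpecialLinearGroup (Fin 2) ℤ) = ((S*T)^i)⁻¹ := hw1
          rw [eq_comm, inv_eq_one] at this; exact this
        rcases hi6 with rfl | rfl | rfl | rfl | rfl | rfl
        · simp
        all_goals (exfalso; revert this; decide)
      · exfalso
        rw [hw1] at hp hs
        clear hw1 h1 h1' hji
        rcases hi6 with rfl | rfl | rfl | rfl | rfl | rfl
        · simp at hs
        all_goals (clear hs; revert hp; decide)
    · exfalso
      have hw1 : w.1 = ((S*T)^i)⁻¹ * S⁻¹ := by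
        have : (S*T)^i * w.1 * S = 1 := h1'
        rw [mul_eq_one_iff_eq_inv] at this
        rw [← this]; group
      have hp : 0 ≤ w.1.1 0 0 ∧ 0 ≤ w.1.1 0 1 ∧ 0 ≤ w.1.1 1 0 ∧ 0 ≤ w.1.1 1 1 := by
        rcases hpos w hw with rfl | ⟨hp, hs⟩
        · simp
        · exact hp
      rw [hw1] at hp
      clear hw1 h1 h1' hji
      rcases hi6 with rfl | rfl | rfl | rfl | rfl | rfl <;> revert hp <;> decide
  have hsurj : Function.Surjective φ := by
    rw [← MonoidHom.range_eq_top, eq_top_iff, ← SpecialLinearGroup.SL2Z_generators,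
      Subgroup.closure_le]
    rintro x (rfl | rfl)
    · exact ⟨⟨a, haK⟩, rfl⟩
    · exact ⟨⟨(T, d), hbK⟩, rfl⟩
  let φe := MulEquiv.ofBijective φ ⟨hinj, hsurj⟩
  refine ⟨((MonoidHom.snd _ _).comp K.subtype).comp φe.symm.toMonoidHom, ?_, ?_⟩
  · have : φe.symm S = ⟨a, haK⟩ := by rw [MulEquiv.symm_apply_eq]; rfl
    simp [this, a]
  · have : φe.symm T = ⟨(T, d), hbK⟩ := by rw [MulEquiv.symm_apply_eq]; rfl
    simp [this]

end Presentation

section Weights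

/-- The free module. -/
abbrev EE := ℕ+ →₀ ℂ

/-- Basis vector. -/
noncomputable def be (n : ℕ+) : EE := Finsupp.single n 1

/-- Weighted l1 norm. -/
noncomputable def wt (c : ℕ) (v : EE) : ℝ := v.sum fun i x => ‖x‖ * ((i : ℕ) : ℝ)^c

lemma one_le_cast (n : ℕ+) : (1:ℝ) ≤ ((n : ℕ) : ℝ) := by exact_mod_cast n.pos

lemma wt_eq (c : ℕ) (v : EE) {s : Finset ℕ+} (h : v.support ⊆ s) :
    wt c v = ∑ i ∈ s, ‖v i‖ * ((i : ℕ) : ℝ)^c :=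
  Finsupp.sum_of_support_subset _ h _ (by simp)

lemma wt_nonneg (c : ℕ) (v : EE) : 0 ≤ wt c v :=
  Finset.sum_nonneg fun i _ => by positivity

lemma wt_zero (c : ℕ) : wt c 0 = 0 := by simp [wt]

lemma wt_be (c : ℕ) (n : ℕ+) : wt c (be n) = ((n : ℕ) : ℝ)^c := by
  simp [wt, be]

lemma wt_smul (c : ℕ) (a : ℂ) (v : EE) : wt c (a • v) = ‖a‖ * wt c v := by
  rw [wt_eq c (a • v) Finsupp.support_smul, wt, Finsupp.sum, Finset.mul_sum]
  exact Finset.sum_congr rfl fun i _ => by simp [mul_assoc]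

lemma wt_neg (c : ℕ) (v : EE) : wt c (-v) = wt c v := by
  have := wt_smul c (-1) v
  simpa using this

lemma wt_add (c : ℕ) (v w : EE) : wt c (v + w) ≤ wt c v + wt c w := by
  classical
  rw [wt_eq c (v + w) Finsupp.support_add, wt_eq c v Finset.subset_union_left,
    wt_eq c w Finset.subset_union_right, ← Finset.sum_add_distrib]
  refine Finset.sum_le_sum fun i _ => ?_
  rw [← add_mul]
  exact mul_le_mul_of_nonneg_right (norm_add_le _ _) (by positivity)

lemma wt_sub (c : ℕ) (v w : EE) : wt c (v - w) ≤ wt c v + wt c w := by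
  rw [sub_eq_add_neg, ← wt_neg c w]; exact wt_add _ _ _

lemma wt_sum {ι : Type*} (c : ℕ) (s : Finset ι) (f : ι → EE) :
    wt c (∑ i ∈ s, f i) ≤ ∑ i ∈ s, wt c (f i) := by
  classical
  induction s using Finset.induction_on with
  | empty => simp [wt_zero]
  | insert a s ha ih =>
    rw [Finset.sum_insert ha, Finset.sum_insert ha]
    exact (wt_add _ _ _).trans (by linarith)

lemma wt_mono {c c' : ℕ} (h : c ≤ c') (v : EE) : wt c v ≤ wt c' v :=
  Finset.sum_le_sum fun i _ =>
    mul_le_mul_of_nonneg_left (pow_le_pow_right₀ (one_le_cast i) h) (norm_nonneg _)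

lemma wt_eq_zero {c : ℕ} {v : EE} (h : wt c v ≤ 0) : v = 0 := by
  by_contra hv
  obtain ⟨i, hi⟩ := Finsupp.ne_iff.mp hv
  have hi' : i ∈ v.support := by simpa using hi
  have h1 : ‖v i‖ * ((i : ℕ) : ℝ)^c ≤ wt c v :=
    Finset.single_le_sum (f := fun i => ‖v i‖ * ((i : ℕ) : ℝ)^c)
      (fun i _ => by positivity) hi'
  have : 0 < ‖v i‖ * ((i : ℕ) : ℝ)^c := by
    have := one_le_cast i
    have : 0 < ‖v i‖ := norm_pos_iff.mpr (by simpa using hi)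
    positivity
  linarith

lemma entry_le_wt (c : ℕ) (v : EE) (i : ℕ+) : ‖v i‖ * ((i : ℕ) : ℝ)^c ≤ wt c v := by
  by_cases hi : i ∈ v.support
  · exact Finset.single_le_sum (f := fun i => ‖v i‖ * ((i : ℕ) : ℝ)^c)
      (fun i _ => by positivity) hi
  · have : v i = 0 := by simpa using hi
    rw [this]; simpa using wt_nonneg c v

lemma wt_supp (c r : ℕ) (v : EE) (θ : ℝ) (h : ∀ d, v d ≠ 0 → ((d : ℕ) : ℝ) ≤ θ) :
    wt (c + r) v ≤ θ^r * wt c v := by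
  rw [wt, wt, Finsupp.sum, Finsupp.sum, Finset.mul_sum]
  refine Finset.sum_le_sum fun i hi => ?_
  have h1 := h i (by simpa using hi)
  have h2 : ((i : ℕ) : ℝ)^r ≤ θ^r := pow_le_pow_left₀ (by positivity) h1 r
  rw [pow_add]
  calc ‖v i‖ * (((i : ℕ) : ℝ)^c * ((i : ℕ) : ℝ)^r) = ((i : ℕ) : ℝ)^r * (‖v i‖ * ((i : ℕ) : ℝ)^c) := by ring
    _ ≤ _ := mul_le_mul_of_nonneg_right h2 (by positivity)

lemma decomp (v : EE) : v = ∑ i ∈ v.support, v i • be i := by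
  conv_lhs => rw [← Finsupp.sum_single v]
  simp [Finsupp.sum, be]

lemma map_decomp (L : EE →ₗ[ℂ] EE) (v : EE) : L v = ∑ i ∈ v.support, v i • L (be i) := by
  conv_lhs => rw [decomp v]
  simp

lemma be_ext {L M : EE →ₗ[ℂ] EE} (h : ∀ n, L (be n) = M (be n)) : L = M := by
  ext1 n; ext1; exact h n

lemma wt_map (L : EE →ₗ[ℂ] EE) (c c' : ℕ) (C : ℝ)
    (h : ∀ n, wt c (L (be n)) ≤ C * ((n : ℕ) : ℝ)^c') (v : EE) :
    wt c (L v) ≤ C * wt c' v := by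
  rw [map_decomp L v]
  refine (wt_sum _ _ _).trans ?_
  rw [wt, Finsupp.sum, Finset.mul_sum]
  refine Finset.sum_le_sum fun i _ => ?_
  rw [wt_smul]
  calc ‖v i‖ * wt c (L (be i)) ≤ ‖v i‖ * (C * ((i : ℕ) : ℝ)^c') :=
        mul_le_mul_of_nonneg_left (h i) (norm_nonneg _)
    _ = _ := by ring

/-- Integral vectors. -/
def intV : AddSubgroup EE where
  carrier := {v | ∀ i, ∃ z : ℤ, v i = z}
  zero_mem' := fun i => ⟨0, by simp⟩
  add_mem' := by
    intro a b ha hb i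
    obtain ⟨x, hx⟩ := ha i
    obtain ⟨y, hy⟩ := hb i
    exact ⟨x + y, by simp [hx, hy]⟩
  neg_mem' := by
    intro a ha i
    obtain ⟨x, hx⟩ := ha i
    exact ⟨-x, by simp [hx]⟩

lemma intV_smul {a : ℂ} {v : EE} (ha : ∃ z : ℤ, a = z) (hv : v ∈ intV) : a • v ∈ intV := by
  intro i
  obtain ⟨x, hx⟩ := ha
  obtain ⟨y, hy⟩ := hv i
  exact ⟨x * y, by simp [hx, hy]⟩

lemma intV_be (n : ℕ+) : be n ∈ intV := by
  intro i
  by_cases h : n = i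
  · exact ⟨1, by simp [be, h]⟩
  · exact ⟨0, by simp [be, h]⟩

lemma intV_map (L : EE →ₗ[ℂ] EE) (h : ∀ n, L (be n) ∈ intV) (v : EE) (hv : v ∈ intV) :
    L v ∈ intV := by
  rw [map_decomp L v]
  exact sum_mem fun i _ => intV_smul (hv i) (h i)

/-- Good maps: integral with polynomial growth. -/
def Good (L : EE →ₗ[ℂ] EE) : Prop :=
  (∀ v ∈ intV, L v ∈ intV) ∧ ∀ c, ∃ (C : ℝ) (c' : ℕ), 0 ≤ C ∧ ∀ v, wt c (L v) ≤ C * wt c' v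

lemma Good.comp {L M : EE →ₗ[ℂ] EE} (hL : Good L) (hM : Good M) : Good (L ∘ₗ M) := by
  refine ⟨fun v hv => hL.1 _ (hM.1 _ hv), fun c => ?_⟩
  obtain ⟨C, c', hC, h⟩ := hL.2 c
  obtain ⟨C', c'', hC', h'⟩ := hM.2 c'
  refine ⟨C * C', c'', by positivity, fun v => (h _).trans ?_⟩
  rw [mul_assoc]
  exact mul_le_mul_of_nonneg_left (h' v) hC

lemma Good.add {L M : EE →ₗ[ℂ] EE} (hL : Good L) (hM : Good M) : Good (L + M) := by
  refine ⟨fun v hv => add_mem (hL.1 _ hv) (hM.1 _ hv), fun c => ?_⟩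
  obtain ⟨C, c', hC, h⟩ := hL.2 c
  obtain ⟨C', c'', hC', h'⟩ := hM.2 c
  refine ⟨C + C', max c' c'', by positivity, fun v => (wt_add _ _ _).trans ?_⟩
  rw [add_mul]
  exact add_le_add ((h v).trans (mul_le_mul_of_nonneg_left (wt_mono (le_max_left _ _) v) hC))
    ((h' v).trans (mul_le_mul_of_nonneg_left (wt_mono (le_max_right _ _) v) hC'))

lemma Good.neg {L : EE →ₗ[ℂ] EE} (hL : Good L) : Good (-L) := by
  refine ⟨fun v hv => neg_mem (hL.1 _ hv), fun c => ?_⟩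
  obtain ⟨C, c', hC, h⟩ := hL.2 c
  exact ⟨C, c', hC, fun v => by rw [LinearMap.neg_apply, wt_neg]; exact h v⟩

lemma Good.id : Good LinearMap.id :=
  ⟨fun v hv => hv, fun c => ⟨1, c, zero_le_one, fun v => by simp⟩⟩

lemma Good.of_large {L : EE →ₗ[ℂ] EE} (h : ∀ n, L (be n) ∈ intV) (c₁ : ℕ)
    (h2 : ∀ c ≥ c₁, ∃ (C : ℝ) (c' : ℕ), 0 ≤ C ∧ ∀ n, wt c (L (be n)) ≤ C * ((n : ℕ) : ℝ)^c') :
    Good L := by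
  refine ⟨intV_map L h, fun c => ?_⟩
  obtain ⟨C, c', hC, h'⟩ := h2 (max c c₁) (le_max_right _ _)
  exact ⟨C, c', hC, fun v => (wt_mono (le_max_left _ _) _).trans (wt_map L _ _ _ h' v)⟩

end Weights

section Systems

/-- Index doubling. -/
noncomputable def Vd : EE →ₗ[ℂ] EE := Finsupp.lmapDomain ℂ ℂ (fun n : ℕ+ => 2 * n)

lemma Vd_be (n : ℕ+) : Vd (be n) = be (2 * n) := by
  simp [Vd, be, Finsupp.lmapDomain_apply, Finsupp.mapDomain_single]

lemma wt_Vd (c : ℕ) (v : EE) : wt c (Vd v) ≤ 2^c * wt c v :=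
  wt_map _ _ _ _ (fun n => by rw [Vd_be, wt_be]; push_cast; rw [mul_pow]) v

/-- A locally nilpotent operator with controlled growth which is a unitriangular
left inverse of doubling. -/
structure Sys (N : EE →ₗ[ℂ] EE) : Prop where
  low : ∀ n d : ℕ+, N (be n) d ≠ 0 → 2 * (d : ℕ) ≤ n
  dbl : ∀ n d : ℕ+, (N (be (2 * n)) - be n) d ≠ 0 → 3 * (d : ℕ) ≤ 2 * n
  int : ∀ n, N (be n) ∈ intV
  bd : ∃ C : ℝ, ∀ n : ℕ+, wt 2 (N (be n)) ≤ C * ((n : ℕ) : ℝ)^2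

lemma exists_small (θ K ε : ℝ) (h0 : 0 ≤ θ) (h1 : θ < 1) (hK : 0 ≤ K) (hε : 0 < ε) :
    ∃ r₀ : ℕ, ∀ r ≥ r₀, θ^r * K ≤ ε := by
  obtain ⟨r₀, hr⟩ := exists_pow_lt_of_lt_one (show 0 < ε / (K + 1) by positivity) h1
  refine ⟨r₀, fun r h => ?_⟩
  have h2 : θ^r ≤ ε / (K+1) := (pow_le_pow_of_le_one h0 h1.le h).trans hr.le
  calc θ^r * K ≤ ε / (K+1) * (K + 1) := mul_le_mul h2 (by linarith) hK (by positivity)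
    _ = ε := by field_simp

lemma Sys.bd' {N : EE →ₗ[ℂ] EE} (h : Sys N) :
    ∃ C : ℝ, 0 ≤ C ∧ ∀ (r : ℕ) (n : ℕ+),
      wt (2 + r) (N (be n)) ≤ ((1/2)^r * C) * ((n : ℕ) : ℝ)^(2 + r) := by
  obtain ⟨C, hC⟩ := h.bd
  have hC0 : 0 ≤ C := by
    have := (wt_nonneg _ _).trans (hC 1)
    simpa using this
  refine ⟨C, hC0, fun r n => ?_⟩
  refine (wt_supp 2 r _ (1/2 * ((n : ℕ) : ℝ)) ?_).trans ?_
  · intro d hd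
    have : 2 * ((d : ℕ) : ℝ) ≤ ((n : ℕ) : ℝ) := by exact_mod_cast h.low n d hd
    linarith
  · calc (1/2 * ((n : ℕ) : ℝ))^r * wt 2 (N (be n))
        ≤ (1/2 * ((n : ℕ) : ℝ))^r * (C * ((n : ℕ) : ℝ)^2) :=
          mul_le_mul_of_nonneg_left (hC n) (by positivity)
      _ = _ := by rw [mul_pow]; ring

lemma Sys.sigma {N : EE →ₗ[ℂ] EE} (h : Sys N) :
    ∃ σ : EE →ₗ[ℂ] EE, (∀ v, N (σ v) = v) ∧ (∀ v, ∃ w, σ v = Vd w) ∧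
      (∀ v, σ (N (Vd v)) = Vd v) ∧ (∀ v ∈ intV, σ v ∈ intV) ∧
      ∃ c₁, ∀ c ≥ c₁, ∃ C : ℝ, 0 ≤ C ∧ ∀ v, wt c (σ v) ≤ C * wt c v := by
  obtain ⟨C, hC0, hC⟩ := h.bd'
  set A : EE →ₗ[ℂ] EE := N ∘ₗ Vd with hA
  have hAbe : ∀ n, A (be n) = N (be (2 * n)) := fun n => by simp [hA, Vd_be]
  obtain ⟨r₀, hr₀⟩ := exists_small (2/3) (4 * C + 1) (1/2) (by norm_num) (by norm_num)
    (by positivity) (by norm_num)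
  have hM : ∀ c ≥ 2 + r₀, ∀ v, wt c ((A - LinearMap.id : EE →ₗ[ℂ] EE) v) ≤ 1/2 * wt c v := by
    intro c hc
    obtain ⟨r, rfl⟩ : ∃ r, c = 2 + r := ⟨c - 2, by omega⟩
    refine wt_map _ _ _ _ fun n => ?_
    have e : (A - LinearMap.id : EE →ₗ[ℂ] EE) (be n) = N (be (2 * n)) - be n := by simp [hAbe]
    rw [e]
    have h2 : wt 2 (N (be (2 * n)) - be n) ≤ (4 * C + 1) * ((n : ℕ) : ℝ)^2 := by
      refine (wt_sub _ _ _).trans ?_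
      have := hC 0 (2 * n)
      rw [wt_be]
      push_cast at this
      simp only [add_zero, pow_zero, one_mul] at this
      calc _ ≤ C * (2 * ((n : ℕ) : ℝ))^2 + ((n : ℕ) : ℝ)^2 := by linarith
        _ = _ := by ring
    refine (wt_supp 2 r _ (2/3 * ((n : ℕ) : ℝ)) ?_).trans ?_
    · intro d hd
      have : 3 * ((d : ℕ) : ℝ) ≤ 2 * ((n : ℕ) : ℝ) := by exact_mod_cast h.dbl n d hd
      linarith
    · calc (2/3 * ((n : ℕ) : ℝ))^r * wt 2 (N (be (2 * n)) - be n)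
          ≤ (2/3 * ((n : ℕ) : ℝ))^r * ((4 * C + 1) * ((n : ℕ) : ℝ)^2) :=
            mul_le_mul_of_nonneg_left h2 (by positivity)
        _ = ((2/3)^r * (4 * C + 1)) * ((n : ℕ) : ℝ)^(2 + r) := by rw [mul_pow]; ring
        _ ≤ _ := mul_le_mul_of_nonneg_right (hr₀ r (by omega)) (by positivity)
  have hAw : ∀ c ≥ 2 + r₀, ∀ w, wt c w ≤ 2 * wt c (A w) := by
    intro c hc w
    have h1 : w = A w - (A - LinearMap.id : EE →ₗ[ℂ] EE) w := by simp
    have h2 : wt c w ≤ wt c (A w) + wt c ((A - LinearMap.id : EE →ₗ[ℂ] EE) w) := by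
      conv_lhs => rw [h1]
      exact wt_sub _ _ _
    have := hM c hc w
    linarith
  have hinj : Function.Injective A := by
    rw [injective_iff_map_eq_zero]
    intro w hw
    apply wt_eq_zero (c := 2 + r₀)
    have := hAw _ le_rfl w
    rw [hw, wt_zero] at this
    linarith
  have hex : ∀ n, ∃ w ∈ intV, A w = be n := by
    intro n
    induction n using PNat.strongInductionOn with
    | _ n ih =>
      choose! f hf using ih
      set u := N (be (2 * n)) - be n with hu
      have hui : u ∈ intV := sub_mem (h.int _) (intV_be n)
      have hud : ∀ d ∈ u.support, d < n := by
        intro d hd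
        have h3 := h.dbl n d (Finsupp.mem_support_iff.mp hd)
        have := n.pos
        exact PNat.coe_lt_coe _ _ |>.mp (by omega)
      refine ⟨be n - ∑ d ∈ u.support, u d • f d,
        sub_mem (intV_be n) (sum_mem fun d hd => intV_smul (hui d) (hf d (hud d hd)).1), ?_⟩
      rw [map_sub, map_sum, hAbe]
      have : ∑ d ∈ u.support, A (u d • f d) = u := by
        conv_rhs => rw [decomp u]
        exact Finset.sum_congr rfl fun d hd => by rw [map_smul, (hf d (hud d hd)).2]
      rw [this, hu]; abel
  choose g hg hgA using hex
  have hexv : ∀ v, A (∑ i ∈ v.support, v i • g i) = v := by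
    intro v
    conv_rhs => rw [decomp v]
    simp [hgA]
  let Ae := LinearEquiv.ofBijective A ⟨hinj, fun v => ⟨_, hexv v⟩⟩
  have hAe : ∀ v, A (Ae.symm v) = v := fun v => Ae.apply_symm_apply v
  have hAe' : ∀ v, Ae.symm (A v) = v := fun v => Ae.symm_apply_apply v
  refine ⟨Vd ∘ₗ Ae.symm.toLinearMap, fun v => hAe v, fun v => ⟨_, rfl⟩, fun v => ?_, ?_, ?_⟩
  · change Vd (Ae.symm (A v)) = _
    rw [hAe']
  · intro v hv
    refine intV_map Vd (fun n => by rw [Vd_be]; exact intV_be _) _ ?_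
    have : Ae.symm v = ∑ i ∈ v.support, v i • g i := hinj (by rw [hexv]; exact hAe v)
    change Ae.symm v ∈ intV
    rw [this]
    exact sum_mem fun i _ => intV_smul (hv i) (hg i)
  · refine ⟨2 + r₀, fun c hc => ⟨2^c * 2, by positivity, fun v => ?_⟩⟩
    refine (wt_Vd c _).trans ?_
    rw [mul_assoc]
    refine mul_le_mul_of_nonneg_left ?_ (by positivity)
    have := hAw c hc (Ae.symm v)
    rw [hAe] at this
    exact this

/-- Recursive definition of the intertwiner. -/
noncomputable def xi (π σ N : EE →ₗ[ℂ] EE) (n : ℕ+) : EE :=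
  π (be n) + σ (∑ d ∈ (N (be n)).support, if _h : d < n then (N (be n)) d • xi π σ N d else 0)
termination_by n
decreasing_by exact _h

lemma Sys.lt {N : EE →ₗ[ℂ] EE} (h : Sys N) {n d : ℕ+} (hd : d ∈ (N (be n)).support) : d < n := by
  have := h.low n d (by simpa using hd)
  have := d.pos
  exact PNat.coe_lt_coe _ _ |>.mp (by omega)

lemma exists_xi {N : EE →ₗ[ℂ] EE} (hN : Sys N) (π σ : EE →ₗ[ℂ] EE) :
    ∃ Ξ : EE →ₗ[ℂ] EE, ∀ v, Ξ v = π v + σ (Ξ (N v)) := by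
  let Ξ : EE →ₗ[ℂ] EE := Finsupp.linearCombination ℂ (xi π σ N)
  have hbe : ∀ n, Ξ (be n) = xi π σ N n := fun n => by simp [Ξ, be]
  have : Ξ = π + σ ∘ₗ Ξ ∘ₗ N := by
    refine be_ext fun n => ?_
    rw [hbe, xi]
    simp only [LinearMap.add_apply, LinearMap.comp_apply]
    congr 2
    rw [map_decomp Ξ]
    exact Finset.sum_congr rfl fun d hd => by rw [dif_pos (hN.lt hd), hbe]
  exact ⟨Ξ, fun v => by conv_lhs => rw [this]
                        simp⟩

lemma exists_intertwiner {N N' : EE →ₗ[ℂ] EE} (hN : Sys N) (hN' : Sys N') :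
    ∃ Ξ : EE →ₗ[ℂ] EE, (∀ v, N' (Ξ v) = Ξ (N v)) ∧ (∀ v, ∃ w, Ξ v - v = Vd w) ∧ Good Ξ := by
  obtain ⟨σ, h1, h2, h3, h4, c₁, h5⟩ := hN'.sigma
  obtain ⟨Ξ, hΞ⟩ := exists_xi hN (LinearMap.id - σ ∘ₗ N') σ
  have hΞ' : ∀ v, Ξ v = v - σ (N' v) + σ (Ξ (N v)) := fun v => by rw [hΞ]; simp
  refine ⟨Ξ, fun v => ?_, fun v => ?_, ?_⟩
  · rw [hΞ', map_add, map_sub, h1, h1]; abel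
  · obtain ⟨w, hw⟩ := h2 (Ξ (N v) - N' v)
    refine ⟨w, ?_⟩
    rw [← hw, hΞ' v, map_sub]; abel
  · obtain ⟨C', hC0', hC'⟩ := hN'.bd'
    obtain ⟨C, hC0, hC⟩ := hN.bd'
    refine Good.of_large (c₁ := c₁ + 2) (fun n => ?_) (fun c hc => ?_)
    · induction n using PNat.strongInductionOn with
      | _ n ih =>
        rw [hΞ']
        refine add_mem (sub_mem (intV_be _) (h4 _ (hN'.int n))) (h4 _ ?_)
        rw [map_decomp]
        exact sum_mem fun d hd => intV_smul (hN.int n d) (ih d (hN.lt hd))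
    · obtain ⟨Cs, hCs0, hCs⟩ := h5 c (by omega)
      obtain ⟨q, rfl⟩ : ∃ q, c = 2 + q := ⟨c - 2, by omega⟩
      obtain ⟨r₀, hr₀⟩ := exists_small (1/2) (Cs * C) (1/2) (by norm_num) (by norm_num)
        (by positivity) (by norm_num)
      set c' := 2 + (q + r₀) with hc'
      set B := 1 + Cs * C' with hB
      have hB0 : 0 ≤ B := by positivity
      refine ⟨2 * B, c', by positivity, fun n => ?_⟩
      induction n using PNat.strongInductionOn with
      | _ n ih =>
        have t1 : wt (2 + q) (be n - σ (N' (be n))) ≤ B * ((n : ℕ) : ℝ)^c' := by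
          refine (wt_sub _ _ _).trans ?_
          rw [wt_be]
          have a1 := (hCs (N' (be n))).trans (mul_le_mul_of_nonneg_left (hC' q n) hCs0)
          have a2 : ((1/2 : ℝ)^q * C') * ((n : ℕ) : ℝ)^(2+q) ≤ C' * ((n : ℕ) : ℝ)^(2+q) := by
            refine mul_le_mul_of_nonneg_right ?_ (by positivity)
            exact mul_le_of_le_one_left hC0' (pow_le_one₀ (by norm_num) (by norm_num))
          have a3 := mul_le_mul_of_nonneg_left a2 hCs0
          have a4 : ((n : ℕ) : ℝ)^(2+q) ≤ ((n : ℕ) : ℝ)^c' :=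
            pow_le_pow_right₀ (one_le_cast n) (by omega)
          calc _ ≤ B * ((n : ℕ) : ℝ)^(2+q) := by rw [hB]; linarith
            _ ≤ _ := mul_le_mul_of_nonneg_left a4 hB0
        have t2 : wt (2 + q) (Ξ (N (be n))) ≤ 2 * B * wt c' (N (be n)) := by
          rw [map_decomp]
          refine (wt_sum _ _ _).trans ?_
          conv_rhs => rw [wt, Finsupp.sum, Finset.mul_sum]
          refine Finset.sum_le_sum fun d hd => ?_
          rw [wt_smul]
          calc _ ≤ ‖N (be n) d‖ * (2 * B * ((d : ℕ) : ℝ)^c') :=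
                mul_le_mul_of_nonneg_left (ih d (hN.lt hd)) (norm_nonneg _)
            _ = _ := by ring
        have t3 := hC (q + r₀) n
        have t4 := hr₀ (q + r₀) (by omega)
        rw [hΞ']
        refine (wt_add _ _ _).trans ?_
        have t5 : wt (2 + q) (σ (Ξ (N (be n)))) ≤ B * ((n : ℕ) : ℝ)^c' := by
          calc _ ≤ Cs * wt (2 + q) (Ξ (N (be n))) := hCs _
            _ ≤ Cs * (2 * B * wt c' (N (be n))) := mul_le_mul_of_nonneg_left t2 hCs0
            _ ≤ Cs * (2 * B * (((1/2)^(q + r₀) * C) * ((n : ℕ) : ℝ)^c')) := by gcongr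
            _ = ((1/2)^(q + r₀) * (Cs * C)) * (2 * B * ((n : ℕ) : ℝ)^c') := by ring
            _ ≤ 1/2 * (2 * B * ((n : ℕ) : ℝ)^c') :=
                mul_le_mul_of_nonneg_right t4 (by positivity)
            _ = _ := by ring
        linarith

lemma Sys.unique {N : EE →ₗ[ℂ] EE} (hN : Sys N) (F : EE →ₗ[ℂ] EE)
    (h1 : ∀ v, N (F v) = F (N v)) (h2 : ∀ v, ∃ w, F v - v = Vd w) (v : EE) : F v = v := by
  obtain ⟨σ, -, -, h3, -⟩ := hN.sigma
  have hF : F = LinearMap.id := by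
    refine be_ext fun n => ?_
    induction n using PNat.strongInductionOn with
    | _ n ih =>
      have : F (N (be n)) = N (be n) := by
        rw [map_decomp F]
        conv_rhs => rw [decomp (N (be n))]
        exact Finset.sum_congr rfl fun d hd => by rw [ih d (hN.lt hd)]; rfl
      obtain ⟨w, hw⟩ := h2 (be n)
      have h0 : N (Vd w) = 0 := by rw [← hw, map_sub, h1, this, sub_self]
      have h5 := h3 w
      rw [h0, map_zero] at h5
      rw [← h5, sub_eq_zero] at hw
      exact hw
  rw [hF]; rfl

end Systems

section Concrete

/-- The operator `D - 1`. -/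
noncomputable def NX : EE →ₗ[ℂ] EE := Finsupp.linearCombination ℂ (fun n : ℕ+ =>
  Finsupp.onFinset (Finset.Icc 1 n) (fun d => if (d : ℕ) ∣ n ∧ d < n then (1 : ℂ) else 0)
    (fun d hd => by
      rw [Finset.mem_Icc]
      have : (d : ℕ) ∣ n ∧ d < n := by
        by_contra h
        exact hd (if_neg h)
      exact ⟨one_le, this.2.le⟩))

lemma NX_be (n d : ℕ+) : NX (be n) d = if (d : ℕ) ∣ n ∧ d < n then (1 : ℂ) else 0 := by
  simp [NX, be]

lemma be_apply (n d : ℕ+) : be n d = if n = d then 1 else 0 := by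
  simp [be, Finsupp.single_apply]

lemma sysX : Sys NX where
  low := by
    intro n d h
    rw [NX_be] at h
    have h' : (d : ℕ) ∣ n ∧ d < n := by
      by_contra h2
      exact h (if_neg h2)
    obtain ⟨⟨k, hk⟩, h2⟩ := h'
    have h3 : (d : ℕ) < n := h2
    have hk2 : 2 ≤ k := by
      by_contra hk'
      have : k ≤ 1 := by omega
      interval_cases k <;> omega
    nlinarith
  dbl := by
    intro n d h
    rw [Finsupp.sub_apply, NX_be, be_apply] at h
    by_cases hnd : n = d
    · subst hnd
      exfalso; apply h
      have : n < 2 * n := by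
        rw [← PNat.coe_lt_coe]; push_cast; have := n.pos; omega
      simp [this]
    · rw [if_neg hnd, sub_zero] at h
      have h' : (d : ℕ) ∣ (2 * n : ℕ+) ∧ d < 2 * n := by
        by_contra h2
        exact h (if_neg h2)
      obtain ⟨⟨k, hk⟩, h2⟩ := h'
      rw [← PNat.coe_lt_coe] at h2
      push_cast at h2 hk
      have hnd' : (n : ℕ) ≠ d := fun h => hnd (PNat.eq h)
      have hk2 : 3 ≤ k := by
        by_contra hk'
        have : k ≤ 2 := by omega
        interval_cases k <;> omega
      nlinarith
  int := by
    intro n d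
    rw [NX_be]
    split_ifs
    · exact ⟨1, by simp⟩
    · exact ⟨0, by simp⟩
  bd := by
    refine ⟨∑' q : ℕ, 1 / (q : ℝ)^2, fun n => ?_⟩
    have hs : Summable (fun q : ℕ => 1 / (q : ℝ)^2) :=
      Real.summable_one_div_nat_pow.mpr (by norm_num)
    let emb : ℕ+ ↪ ℕ := ⟨fun n => (n : ℕ), PNat.coe_injective⟩
    have h1 : wt 2 (NX (be n)) ≤ ∑ d ∈ (n : ℕ).divisors, (d : ℝ)^2 := by
      calc wt 2 (NX (be n)) ≤ ∑ d ∈ (NX (be n)).support, (((d : ℕ) : ℝ))^2 := by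
            refine Finset.sum_le_sum fun d _ => ?_
            rw [NX_be]
            split_ifs <;> simp
        _ = ∑ d ∈ (NX (be n)).support.map emb, (d : ℝ)^2 := by
            rw [Finset.sum_map]; rfl
        _ ≤ _ := by
            refine Finset.sum_le_sum_of_subset_of_nonneg ?_ (fun _ _ _ => by positivity)
            intro d hd
            rw [Finset.mem_map] at hd
            obtain ⟨e, he, rfl⟩ := hd
            rw [Finsupp.mem_support_iff, NX_be] at he
            have h' : (e : ℕ) ∣ n ∧ e < n := by
              by_contra h2
              exact he (if_neg h2)
            exact Nat.mem_divisors.mpr ⟨h'.1, n.pos.ne'⟩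
    refine h1.trans ?_
    rw [← Nat.sum_div_divisors (n : ℕ) (fun d => (d : ℝ)^2)]
    calc ∑ d ∈ (n : ℕ).divisors, (((n : ℕ) / d : ℕ) : ℝ)^2
        = ∑ d ∈ (n : ℕ).divisors, (1 / (d : ℝ)^2) * ((n : ℕ) : ℝ)^2 := by
          refine Finset.sum_congr rfl fun d hd => ?_
          rw [Nat.cast_div (Nat.dvd_of_mem_divisors hd)
            (by exact_mod_cast (Nat.pos_of_mem_divisors hd).ne')]
          rw [div_pow]; ring
      _ = (∑ d ∈ (n : ℕ).divisors, (1 / (d : ℝ)^2)) * ((n : ℕ) : ℝ)^2 := by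
          rw [Finset.sum_mul]
      _ ≤ _ := by
          refine mul_le_mul_of_nonneg_right ?_ (by positivity)
          exact hs.sum_le_tsum _ (fun _ _ => by positivity)

/-- Halving. -/
noncomputable def Hf : EE →ₗ[ℂ] EE :=
  Finsupp.lcomapDomain (fun n : ℕ+ => 2 * n) (fun _ _ h => mul_left_cancel h)

lemma Hf_apply (v : EE) (i : ℕ+) : Hf v i = v (2 * i) := rfl

lemma pnat_cases (n : ℕ+) : (∃ m : ℕ+, n = 2 * m) ∨ ¬ (2 ∣ (n : ℕ)) := by
  by_cases h : 2 ∣ (n : ℕ)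
  · left
    obtain ⟨m, hm⟩ := h
    have := n.pos
    have hm0 : 0 < m := by omega
    lift m to ℕ+ using hm0
    exact ⟨m, PNat.eq (by rw [PNat.mul_coe]; exact hm)⟩
  · exact Or.inr h

lemma Hf_be (n : ℕ+) : Hf (be (2 * n)) = be n := by
  ext i
  rw [Hf_apply, be_apply, be_apply]
  simp

lemma Hf_odd (n : ℕ+) (h : ¬ (2 ∣ (n : ℕ))) : Hf (be n) = 0 := by
  ext i
  rw [Hf_apply, be_apply, if_neg]
  · rfl
  · rintro rfl
    exact h ⟨i, by simp⟩

lemma Hf_Vd (v : EE) : Hf (Vd v) = v := by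
  have : Hf ∘ₗ Vd = LinearMap.id := be_ext fun n => by simp [Vd_be, Hf_be]
  exact LinearMap.congr_fun this v

lemma wt_Hf (c : ℕ) (v : EE) : wt c (Hf v) ≤ wt c v := by
  have := wt_map Hf c c 1 (fun n => ?_) v
  · simpa using this
  · rcases pnat_cases n with ⟨m, rfl⟩ | h
    · rw [Hf_be, wt_be, one_mul]
      refine pow_le_pow_left₀ (by positivity) ?_ _
      push_cast
      have := one_le_cast m
      linarith
    · rw [Hf_odd n h, wt_zero]; positivity

lemma intV_Hf (v : EE) (hv : v ∈ intV) : Hf v ∈ intV := fun i => hv (2 * i)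

/-- Parity of the 2-adic valuation. -/
def ev (n : ℕ+) : Prop := Even (padicValNat 2 n)

lemma ev_two_mul (n : ℕ+) : ev (2 * n) ↔ ¬ ev n := by
  unfold ev
  rw [PNat.mul_coe, padicValNat.mul (by simp) n.pos.ne']
  have : padicValNat 2 ((2 : ℕ+) : ℕ) = 1 := padicValNat.self (by norm_num)
  rw [this, add_comm, Nat.even_add_one]

lemma not_ev {n : ℕ+} (h : ¬ ev n) : ∃ m : ℕ+, n = 2 * m := by
  rcases pnat_cases n with h' | h'
  · exact h'
  · exfalso; apply h
    unfold ev
    rw [padicValNat.eq_zero_of_not_dvd h']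
    exact Even.zero

open Classical in
/-- Model nilpotent operator. -/
noncomputable def NY : EE →ₗ[ℂ] EE := Finsupp.linearCombination ℂ (fun n : ℕ+ =>
  if ev n then Hf (be n) + Hf (Hf (be n)) + Hf (Hf (Hf (Hf (be n))))
  else Hf (be n) + Hf (Hf (Hf (be n))))

open Classical in
/-- Model of `S`. -/
noncomputable def SY : EE →ₗ[ℂ] EE := Finsupp.linearCombination ℂ (fun n : ℕ+ =>
  if ev n then Vd (be n) else - Hf (be n))

lemma NY_ev {n : ℕ+} (h : ev n) :
    NY (be n) = Hf (be n) + Hf (Hf (be n)) + Hf (Hf (Hf (Hf (be n)))) := by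
  simp [NY, be, h]

lemma NY_od {n : ℕ+} (h : ¬ ev n) : NY (be n) = Hf (be n) + Hf (Hf (Hf (be n))) := by
  simp [NY, be, h]

lemma SY_ev {n : ℕ+} (h : ev n) : SY (be n) = Vd (be n) := by
  simp [SY, be, h]

lemma SY_od {n : ℕ+} (h : ¬ ev n) : SY (be n) = - Hf (be n) := by
  simp [SY, be, h]

lemma be_ne {n d : ℕ+} (h : be n d ≠ 0) : (n : ℕ) = d := by
  rw [be_apply] at h
  by_contra h2
  exact h (if_neg fun h3 => h2 (by rw [h3]))

lemma sysY : Sys NY where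
  low := by
    intro n d h
    by_cases hn : ev n
    · rw [NY_ev hn] at h
      simp only [Finsupp.add_apply, Hf_apply] at h
      have : be n (2 * d) ≠ 0 ∨ be n (2 * (2 * d)) ≠ 0 ∨ be n (2 * (2 * (2 * (2 * d)))) ≠ 0 := by
        by_contra! h2
        obtain ⟨a, b, c⟩ := h2
        exact h (by rw [a, b, c]; simp)
      rcases this with h | h | h <;> have := be_ne h <;> push_cast at this <;> omega
    · rw [NY_od hn] at h
      simp only [Finsupp.add_apply, Hf_apply] at h
      have : be n (2 * d) ≠ 0 ∨ be n (2 * (2 * (2 * d))) ≠ 0 := by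
        by_contra! h2
        obtain ⟨a, b⟩ := h2
        exact h (by rw [a, b]; simp)
      rcases this with h | h <;> have := be_ne h <;> push_cast at this <;> omega
  dbl := by
    intro n d h
    by_cases hn : ev (2 * n)
    · rw [NY_ev hn, Hf_be] at h
      simp only [Finsupp.add_apply, Finsupp.sub_apply, Hf_apply] at h
      have : be n (2 * d) ≠ 0 ∨ be n (2 * (2 * (2 * d))) ≠ 0 := by
        by_contra! h2
        obtain ⟨a, b⟩ := h2
        exact h (by rw [a, b]; simp)
      rcases this with h | h <;> have := be_ne h <;> push_cast at this <;> omega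
    · rw [NY_od hn, Hf_be] at h
      simp only [Finsupp.add_apply, Finsupp.sub_apply, Hf_apply] at h
      have : be n (2 * (2 * d)) ≠ 0 := by
        intro a
        exact h (by rw [a]; simp)
      have := be_ne this
      push_cast at this
      omega
  int := by
    intro n
    have h1 := intV_Hf _ (intV_be n)
    have h2 := intV_Hf _ h1
    have h3 := intV_Hf _ h2
    have h4 := intV_Hf _ h3
    by_cases hn : ev n
    · rw [NY_ev hn]; exact add_mem (add_mem h1 h2) h4
    · rw [NY_od hn]; exact add_mem h1 h3
  bd := by
    refine ⟨3, fun n => ?_⟩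
    have h0 := wt_be 2 n
    have h1 := wt_Hf 2 (be n)
    have h2 := wt_Hf 2 (Hf (be n))
    have h3 := wt_Hf 2 (Hf (Hf (be n)))
    have h4 := wt_Hf 2 (Hf (Hf (Hf (be n))))
    by_cases hn : ev n
    · rw [NY_ev hn]
      have a1 := wt_add 2 (Hf (be n) + Hf (Hf (be n))) (Hf (Hf (Hf (Hf (be n)))))
      have a2 := wt_add 2 (Hf (be n)) (Hf (Hf (be n)))
      linarith
    · rw [NY_od hn]
      have a2 := wt_add 2 (Hf (be n)) (Hf (Hf (Hf (be n))))
      have := wt_nonneg 2 (be n)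
      linarith

lemma good_SY : Good SY := by
  refine Good.of_large (c₁ := 0) (fun n => ?_) (fun c _ => ⟨2^c, c, by positivity, fun n => ?_⟩)
  · by_cases hn : ev n
    · rw [SY_ev hn, Vd_be]; exact intV_be _
    · rw [SY_od hn]; exact neg_mem (intV_Hf _ (intV_be _))
  · by_cases hn : ev n
    · rw [SY_ev hn, ← wt_be]; exact wt_Vd _ _
    · rw [SY_od hn, wt_neg, ← wt_be]
      refine (wt_Hf _ _).trans (le_mul_of_one_le_left (wt_nonneg _ _) ?_)
      exact one_le_pow₀ (by norm_num)

/-- Vectors supported on even valuations. -/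
def Ev (v : EE) : Prop := ∀ i, v i ≠ 0 → ev i
/-- Vectors supported on odd valuations. -/
def Od (v : EE) : Prop := ∀ i, v i ≠ 0 → ¬ ev i

lemma Ev.hf {v : EE} (h : Ev v) : Od (Hf v) := fun i hi => (ev_two_mul i).mp (h (2 * i) hi)

lemma Od.hf {v : EE} (h : Od v) : Ev (Hf v) := fun i hi => by
  have := h (2 * i) hi
  rwa [ev_two_mul, not_not] at this

lemma map_congr_supp (L M : EE →ₗ[ℂ] EE) (v : EE) (h : ∀ i, v i ≠ 0 → L (be i) = M (be i)) :
    L v = M v := by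
  rw [map_decomp L, map_decomp M]
  exact Finset.sum_congr rfl fun i hi => by rw [h i (by simpa using hi)]

lemma Ev.S {v : EE} (h : Ev v) : SY v = Vd v :=
  map_congr_supp _ _ _ fun i hi => SY_ev (h i hi)

lemma Od.S {v : EE} (h : Od v) : SY v = - Hf v :=
  map_congr_supp SY (-Hf) _ fun i hi => SY_od (h i hi)

lemma Od.VH {v : EE} (h : Od v) : Vd (Hf v) = v :=
  map_congr_supp (Vd ∘ₗ Hf) LinearMap.id _ fun i hi => by
    obtain ⟨m, rfl⟩ := not_ev (h i hi)
    simp [Hf_be, Vd_be]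

lemma Ev.N {v : EE} (h : Ev v) : NY v = Hf v + Hf (Hf v) + Hf (Hf (Hf (Hf v))) :=
  map_congr_supp NY (Hf + Hf ∘ₗ Hf + Hf ∘ₗ Hf ∘ₗ Hf ∘ₗ Hf) _ fun i hi => NY_ev (h i hi)

lemma Od.N {v : EE} (h : Od v) : NY v = Hf v + Hf (Hf (Hf v)) :=
  map_congr_supp NY (Hf + Hf ∘ₗ Hf ∘ₗ Hf) _ fun i hi => NY_od (h i hi)

lemma Ev_be {n : ℕ+} (h : ev n) : Ev (be n) := fun i hi => by
  rwa [← PNat.eq (be_ne hi)]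

lemma Od_be {n : ℕ+} (h : ¬ ev n) : Od (be n) := fun i hi => by
  rwa [← PNat.eq (be_ne hi)]

lemma Od_Vd_be {n : ℕ+} (h : ev n) : Od (Vd (be n)) := by
  rw [Vd_be]
  exact Od_be (by rw [ev_two_mul, not_not]; exact h)

lemma SY_sq (v : EE) : SY (SY v) = -v := by
  have : SY ∘ₗ SY = -LinearMap.id := by
    refine be_ext fun n => ?_
    simp only [LinearMap.comp_apply, LinearMap.neg_apply, LinearMap.id_apply]
    by_cases hn : ev n
    · rw [SY_ev hn, (Od_Vd_be hn).S, Hf_Vd]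
    · rw [SY_od hn, map_neg, (Od_be hn).hf.S, (Od_be hn).VH]
  exact LinearMap.congr_fun this v

/-- Model of `T`. -/
noncomputable def DY : EE →ₗ[ℂ] EE := LinearMap.id + NY

lemma DY_apply (v : EE) : DY v = v + NY v := rfl

lemma DY_rel (v : EE) : DY (SY (DY v)) = SY v + DY v := by
  have : DY ∘ₗ SY ∘ₗ DY = SY + DY := by
    refine be_ext fun n => ?_
    simp only [LinearMap.comp_apply, LinearMap.add_apply]
    by_cases hn : ev n
    · have x0 := Ev_be hn
      have x1 := x0.hf
      have x2 := x1.hf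
      have x3 := x2.hf
      have x4 := x3.hf
      have y := Od_Vd_be hn
      rw [DY_apply (be n), x0.N]
      simp only [map_add, x0.S, x1.S, x2.S, x4.S, x1.VH, x3.VH]
      simp only [DY_apply, map_add, map_neg, y.N, x1.N, x2.N, x3.N, Hf_Vd]
      abel
    · have x0 := Od_be hn
      have x1 := x0.hf
      have x2 := x1.hf
      have x3 := x2.hf
      rw [DY_apply (be n), x0.N]
      simp only [map_add, x0.S, x1.S, x3.S, x0.VH, x2.VH]
      simp only [DY_apply, map_add, map_neg, x0.N, x1.N, x2.N]
      abel
  exact LinearMap.congr_fun this v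

/-- The divisor operator. -/
noncomputable def DX : EE →ₗ[ℂ] EE := LinearMap.id + NX

lemma DX_apply (v : EE) : DX v = v + NX v := rfl

lemma good_NX : Good NX := by
  obtain ⟨C, hC0, hC⟩ := sysX.bd'
  refine Good.of_large (c₁ := 2) sysX.int (fun c hc => ?_)
  obtain ⟨r, rfl⟩ : ∃ r, c = 2 + r := ⟨c - 2, by omega⟩
  exact ⟨(1/2)^r * C, 2 + r, by positivity, hC r⟩

lemma good_DX : Good DX := Good.id.add good_NX

lemma exists_S : ∃ S : EE →ₗ[ℂ] EE, Good S ∧ (∀ v, S (S v) = -v) ∧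
    ∀ v, DX (S (DX v)) = S v + DX v := by
  obtain ⟨A, hA1, hA2, hA3⟩ := exists_intertwiner sysX sysY
  obtain ⟨B, hB1, hB2, hB3⟩ := exists_intertwiner sysY sysX
  have hBA : ∀ v, B (A v) = v := sysX.unique (B ∘ₗ A) (fun v => by simp [hB1, hA1]) (fun v => by
    obtain ⟨w, hw⟩ := hA2 v
    obtain ⟨w', hw'⟩ := hB2 (A v)
    exact ⟨w' + w, by rw [map_add, ← hw, ← hw']; simp⟩)
  have hAB : ∀ v, A (B v) = v := sysY.unique (A ∘ₗ B) (fun v => by simp [hB1, hA1]) (fun v => by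
    obtain ⟨w, hw⟩ := hB2 v
    obtain ⟨w', hw'⟩ := hA2 (B v)
    exact ⟨w' + w, by rw [map_add, ← hw, ← hw']; simp⟩)
  have hAD : ∀ v, A (DX v) = DY (A v) := fun v => by rw [DX_apply, DY_apply, map_add, hA1]
  have hBD : ∀ v, DX (B v) = B (DY v) := fun v => by rw [DX_apply, DY_apply, map_add, hB1]
  refine ⟨B ∘ₗ SY ∘ₗ A, hB3.comp (good_SY.comp hA3), fun v => ?_, fun v => ?_⟩
  · simp only [LinearMap.comp_apply]
    rw [hAB, SY_sq, map_neg, hBA]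
  · simp only [LinearMap.comp_apply]
    rw [hAD, hBD, DY_rel, map_add, ← hAD, hBA]

end Concrete

theorem stmt1 :
    ∃ ρ : Matrix.SpecialLinearGroup (Fin 2) ℤ →* ((ℕ+ →₀ ℂ) ≃ₗ[ℂ] (ℕ+ →₀ ℂ)),
      -- (a) `ρ(T)` is the divisor matrix
      (∀ i j : ℕ+, entry (ρ Tgen) i j = if (i : ℕ) ∣ (j : ℕ) then 1 else 0) ∧
      -- (b) all entries of every `ρ(Y)` are integers
      (∀ Y : Matrix.SpecialLinearGroup (Fin 2) ℤ, ∀ i j : ℕ+,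
        ∃ z : ℤ, entry (ρ Y) i j = (z : ℂ)) ∧
      -- (c) each `ρ(Y)` satisfies the growth/vanishing conditions of `DR₀`
      (∀ Y : Matrix.SpecialLinearGroup (Fin 2) ℤ, ∃ C c : ℝ, 0 < C ∧ 0 < c ∧
        (∀ i j : ℕ+, C * ((j : ℕ) : ℝ) ^ c < ((i : ℕ) : ℝ) → entry (ρ Y) i j = 0) ∧
        (∀ i j : ℕ+, ‖entry (ρ Y) i j‖ ≤ C * ((j : ℕ) : ℝ) ^ c)) := by
  obtain ⟨S, hS, hS2, hrel⟩ := exists_S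
  let s : EE ≃ₗ[ℂ] EE := LinearEquiv.ofLinear S (-S)
    (LinearMap.ext fun v => by simp [hS2]) (LinearMap.ext fun v => by simp [hS2])
  let d : EE ≃ₗ[ℂ] EE := LinearEquiv.ofLinear DX (S + -(S ∘ₗ DX ∘ₗ S))
    (LinearMap.ext fun v => by simp [hrel, hS2]) (LinearMap.ext fun v => by simp [hrel, hS2])
  have hs : ∀ v, s v = S v := fun v => rfl
  have hd : ∀ v, d v = DX v := fun v => rfl
  have h4 : s^4 = 1 := by
    ext1 v
    simp only [pow_succ, pow_zero, one_mul, LinearEquiv.mul_apply, hs, hS2]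
    simp
  have h6 : (s * d)^3 = s^2 := by
    ext1 v
    simp only [pow_succ, pow_zero, one_mul, LinearEquiv.mul_apply, hs, hd, hS2, hrel, map_add,
      map_neg]
    abel
  obtain ⟨ρ, hρS, hρT⟩ := pres_exists s d h4 h6
  have hgood : ∀ Y, Good (ρ Y).toLinearMap ∧ Good (ρ Y)⁻¹.toLinearMap := by
    intro Y
    have hY : Y ∈ Subgroup.closure {ModularGroup.S, ModularGroup.T} := by
      rw [SpecialLinearGroup.SL2Z_generators]; trivial
    induction hY using Subgroup.closure_induction with
    | mem x hx =>
      rcases hx with rfl | rfl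
      · rw [hρS]; exact ⟨hS, hS.neg⟩
      · rw [hρT]; exact ⟨good_DX, hS.add (hS.comp (good_DX.comp hS)).neg⟩
    | one => rw [map_one]; exact ⟨Good.id, Good.id⟩
    | mul x y _ _ hx hy =>
      rw [map_mul, mul_inv_rev]
      exact ⟨hx.1.comp hy.1, hy.2.comp hx.2⟩
    | inv x _ hx => rw [map_inv, inv_inv]; exact ⟨hx.2, hx.1⟩
  have hinteg : ∀ Y i j, ∃ z : ℤ, entry (ρ Y) i j = (z : ℂ) := fun Y i j =>
    (hgood Y).1.1 (be j) (intV_be j) i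
  refine ⟨ρ, fun i j => ?_, hinteg, fun Y => ?_⟩
  · have : Tgen = ModularGroup.T := rfl
    rw [this, hρT]
    change DX (be j) i = _
    rw [DX_apply, Finsupp.add_apply, be_apply, NX_be]
    by_cases hij : j = i
    · subst hij; simp
    · rw [if_neg hij, zero_add]
      refine if_congr ⟨fun h => h.1, fun h => ⟨h, ?_⟩⟩ rfl rfl
      have h1 := Nat.le_of_dvd j.pos h
      exact lt_of_le_of_ne h1 (fun h => hij h.symm)
  · obtain ⟨C, c, hC0, hC⟩ := (hgood Y).1.2 1
    have hb : ∀ i j : ℕ+, ‖entry (ρ Y) i j‖ * ((i : ℕ) : ℝ) ≤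
        (C + 1) * ((j : ℕ) : ℝ)^((c + 1 : ℕ) : ℝ) := by
      intro i j
      have h1 := (entry_le_wt 1 (ρ Y (be j)) i).trans (hC (be j))
      rw [pow_one, wt_be] at h1
      refine h1.trans ?_
      rw [Real.rpow_natCast]
      exact mul_le_mul (by linarith) (pow_le_pow_right₀ (one_le_cast j) (by omega))
        (by positivity) (by positivity)
    refine ⟨C + 1, ((c + 1 : ℕ) : ℝ), by positivity, by positivity, fun i j hij => ?_,
      fun i j => ?_⟩
    · obtain ⟨z, hz⟩ := hinteg Y i j
      have h1 := hb i j
      have h2 : ‖entry (ρ Y) i j‖ < 1 := by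
        have := one_le_cast i
        by_contra! h3
        nlinarith
      rw [hz] at h2 ⊢
      rw [Complex.norm_intCast] at h2
      have h3 : |z| < 1 := by exact_mod_cast h2
      rw [Int.abs_lt_one_iff] at h3
      simp [h3]
    · have h1 := hb i j
      have := one_le_cast i
      have := norm_nonneg (entry (ρ Y) i j)
      nlinarith
end

section
/- Let G = SL(2,ℤ) and let V be the standard 2-dimensional module over the group algebra ℂG, i.e. V = ℂ² with G acting by matrix multiplication. Then Ext¹_{ℂG}(V, V) is a 1-dimensional complex vector space: Ext¹_{ℂG}(V, V) ≅ ℂ. -/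
open CategoryTheory

/-- The standard 2-dimensional representation of `SL(2,ℤ)` on `ℂ²`,
given by matrix multiplication (via the inclusion `SL(2,ℤ) ⊂ GL(2,ℂ)`). -/
noncomputable def stdRep :
    Representation ℂ (Matrix.SpecialLinearGroup (Fin 2) ℤ) (Fin 2 → ℂ) :=
  (LinearEquiv.automorphismGroup.toLinearMapMonoidHom).comp
    ((Matrix.SpecialLinearGroup.toLin').comp
      (Matrix.SpecialLinearGroup.map (Int.castRingHom ℂ)))

/-- The standard module `V = ℂ²` as an object of the category of
`ℂ[SL(2,ℤ)]`-modules (equivalently, representations of `SL(2,ℤ)` over `ℂ`). -/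
noncomputable def Vstd : Rep ℂ (Matrix.SpecialLinearGroup (Fin 2) ℤ) :=
  Rep.of stdRep

section helpers
open CategoryTheory MonoidalCategory Limits

section part1
variable {G : Type} [Group G]

instance aux1 (V : Rep ℂ G) : (tensorLeft V).PreservesMonomorphisms where
  preserves {X Y} f hf := by
    rw [Rep.mono_iff_injective] at hf ⊢
    exact Module.Flat.lTensor_preserves_injective_linearMap (M := V) f.hom.toLinearMap hf

instance aux2 (V : Rep ℂ G) : (tensorLeft V).PreservesHomology :=
  have : PreservesColimitsOfSize.{0,0} (tensorLeft V) := (ihom.adjunction V).leftAdjoint_preservesColimits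
  Functor.preservesHomology_of_preservesMonos_and_cokernels _

instance aux0 (V : Rep ℂ G) : (ihom V).PreservesEpimorphisms where
  preserves {X Y} f hf := by
    rw [Rep.epi_iff_surjective] at hf ⊢
    obtain ⟨s, hs⟩ := f.hom.toLinearMap.exists_rightInverse_of_surjective
      (LinearMap.range_eq_top.2 hf)
    intro (y : V →ₗ[ℂ] Y)
    refine ⟨(s ∘ₗ y : V →ₗ[ℂ] X), ?_⟩
    refine LinearMap.ext fun v => ?_
    exact LinearMap.congr_fun hs (y v)

instance aux3 (V : Rep ℂ G) : (tensorLeft V).PreservesProjectiveObjects :=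
  Functor.preservesProjectiveObjects_of_adjunction_of_preservesEpimorphisms (ihom.adjunction V)

noncomputable def res (V : Rep ℂ G) : ProjectiveResolution (V ⊗ Rep.trivial ℂ G ℂ) :=
  (tensorLeft V).mapProjectiveResolution (Rep.barResolution ℂ G)

noncomputable def cxIso (V W : Rep ℂ G) : (res V).complex.linearYonedaObj ℂ W ≅
   (Rep.barComplex ℂ G).linearYonedaObj ℂ ((ihom V).obj W) :=
  HomologicalComplex.Hom.isoOfComponents
    (fun i => (Rep.MonoidalClosed.linearHomEquiv V ((Rep.barComplex ℂ G).X i) W).toModuleIso) (by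
      rintro i j (h : i + 1 = j)
      subst h
      ext x
      exact (Adjunction.homEquiv_naturality_left (ihom.adjunction V) _ _).symm)

noncomputable def extIso (V W : Rep ℂ G) (n : ℕ): ((Ext ℂ (Rep ℂ G) n).obj (Opposite.op V)).obj W ≅
  groupCohomology ((ihom V).obj W) n :=
  ((Ext ℂ (Rep ℂ G) n).mapIso (ρ_ V).op).app W ≪≫ (res V).isoExt n W ≪≫
   (HomologicalComplex.homologyFunctor _ _ n).mapIso (cxIso V W ≪≫ (groupCohomology.inhomogeneousCochainsIso _).symm)

end part1
open Matrix MatrixGroups ModularGroup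

/-- complexification of an integral matrix -/
noncomputable def cm : SL(2,ℤ) →* Matrix (Fin 2) (Fin 2) ℂ where
  toFun g := !![(g 0 0 : ℂ), (g 0 1 : ℂ); (g 1 0 : ℂ), (g 1 1 : ℂ)]
  map_one' := by ext i j; fin_cases i <;> fin_cases j <;> simp
  map_mul' g h := by
    ext i j; fin_cases i <;> fin_cases j <;> simp [Matrix.mul_apply, Fin.sum_univ_two]

/-- conjugation action -/
noncomputable def cj (g : SL(2,ℤ)) :
    Matrix (Fin 2) (Fin 2) ℂ →ₗ[ℂ] Matrix (Fin 2) (Fin 2) ℂ :=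
  LinearMap.mulLeft ℂ (cm g) ∘ₗ LinearMap.mulRight ℂ (cm g⁻¹)

lemma cj_apply (g : SL(2,ℤ)) (X) : cj g X = cm g * (X * cm g⁻¹) := rfl

lemma cj_mul (g h : SL(2,ℤ)) (X) : cj (g * h) X = cj g (cj h X) := by
  simp only [cj_apply, _root_.mul_inv_rev, map_mul, mul_assoc]

lemma cj_one (X) : cj 1 X = X := by simp [cj_apply]

lemma cm_inv (g : SL(2,ℤ)) : cm g⁻¹ = !![(g 1 1 : ℂ), -(g 0 1 : ℂ); -(g 1 0 : ℂ), (g 0 0 : ℂ)] := by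
  simp [cm, Matrix.SpecialLinearGroup.SL2_inv_expl]

lemma cj_S (X) : cj S X = !![X 1 1, - X 1 0; - X 0 1, X 0 0] := by
  rw [cj_apply, cm_inv]
  ext i j; fin_cases i <;> fin_cases j <;> simp [cm, S, Matrix.mul_apply, Fin.sum_univ_two]

lemma cj_T (X) : cj T X = !![X 0 0 + X 1 0, X 0 1 + X 1 1 - X 0 0 - X 1 0; X 1 0, X 1 1 - X 1 0] := by
  rw [cj_apply, cm_inv]
  ext i j; fin_cases i <;> fin_cases j <;> simp [cm, T, Matrix.mul_apply, Fin.sum_univ_two] <;> ring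

def IsCoc (D : SL(2,ℤ) → Matrix (Fin 2) (Fin 2) ℂ) : Prop := ∀ g h, D (g * h) = cj g (D h) + D g

lemma IsCoc.upper {D} (hD : IsCoc D) (h0 : D T 1 0 = 0) : ∃ X, ∀ g, D g = cj g X - X := by
  have h1 : D 1 = 0 := by
    have := hD 1 1
    rw [mul_one, cj_one] at this
    simpa using this
  have hcm : ∀ X, cj (-1) X = X := fun X => by
    rw [cj_apply, cm_inv]
    ext i j; fin_cases i <;> fin_cases j <;> simp [cm, Matrix.mul_apply, Fin.sum_univ_two]
  have hm : D (-1) = 0 := by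
    have := hD (-1) (-1)
    rw [hcm, neg_mul_neg, mul_one, h1] at this
    have h2 : (2:ℂ) • D (-1) = 0 := by rw [two_smul, ← this]
    simpa using h2
  have hS : cj S (D S) + D S = 0 := by
    rw [← hD, ← hm]; congr 1; decide
  have hU : D ((S * T) * ((S * T) * (S * T))) = 0 := by
    rw [← hm]; congr 1; decide
  have hA := hD (S*T) (S*T)
  rw [hD, hA, hD S T, cj_mul, cj_mul] at hU
  simp only [cj_S, cj_T, ← Matrix.ext_iff, Fin.forall_fin_two] at hS hU
  simp [h0] at hS hU
  obtain ⟨⟨s1, s2⟩, s3, s4⟩ := hS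
  obtain ⟨⟨u1, u2⟩, u3, u4⟩ := hU
  set X : Matrix (Fin 2) (Fin 2) ℂ := !![0, -D S 0 1 - D T 0 0; D T 0 0, D S 0 0] with hX
  refine ⟨X, fun g => ?_⟩
  have hg : g ∈ Subgroup.closure {S, T} := by simp [SpecialLinearGroup.SL2Z_generators]
  induction hg using Subgroup.closure_induction with
  | mem x hx =>
    rcases hx with rfl | rfl
    · rw [cj_S]; ext i j; fin_cases i <;> fin_cases j <;> simp [hX] <;> grind
    · rw [cj_T]; ext i j; fin_cases i <;> fin_cases j <;> simp [hX, h0] <;> grind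
  | one => simp [h1, cj_one]
  | mul x y _ _ hx hy => rw [hD, hx, hy, cj_mul, map_sub]; abel
  | inv x _ hx =>
    have h := hD x⁻¹ x
    rw [inv_mul_cancel, h1, hx, map_sub, ← cj_mul, inv_mul_cancel, cj_one] at h
    rw [eq_comm, add_comm, add_eq_zero_iff_eq_neg] at h
    rw [h, neg_sub]

/-- quadratic invariant -/
def xq (h : SL(2,ℤ)) : ℤ := h 0 0 * h 0 1 + h 1 0 * h 1 1

/-- indicator of an almost invariant set -/
noncomputable def ai (h : SL(2,ℤ)) : ℂ := if 0 < xq h then 1 else 0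

lemma arith (a b c d : ℤ) (h : a * d - b * c = 1)
    (hne : ¬ (0 < a * b + c * d ↔ 0 < (a - c) * (b - d) + c * d)) :
    (c = 0 ∧ d = a ∧ b = a ∧ (a = 1 ∨ a = -1)) ∨ (a = 0 ∧ d = 0 ∧ c = -b ∧ (b = 1 ∨ b = -1)) := by
  have e : ∀ n : ℤ, 0 ≤ n * (n + 1) := fun n => by
    rcases le_or_gt 0 n with h | h
    · positivity
    · nlinarith
  have h1 : 0 ≤ (a * b) * (c * d) := by
    have := e (b * c)
    have h2 : a * d = b * c + 1 := by linarith
    calc 0 ≤ _ := this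
      _ = _ := by rw [← h2]; ring
  have h2 : 0 ≤ ((a - c) * (b - d)) * (c * d) := by
    have := e ((b - d) * c)
    have h2 : (a - c) * d = (b - d) * c + 1 := by linarith
    calc 0 ≤ _ := this
      _ = _ := by rw [← h2]; ring
  have h3 : c * d = 0 := by
    rcases lt_trichotomy (c * d) 0 with h | h | h
    · exfalso; apply hne
      have k1 : a * b ≤ 0 := by by_contra! hh; nlinarith
      have k2 : (a - c) * (b - d) ≤ 0 := by by_contra! hh; nlinarith
      constructor <;> intro <;> linarith
    · exact h
    · exfalso; apply hne
      have k1 : 0 ≤ a * b := by by_contra! hh; nlinarith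
      have k2 : 0 ≤ (a - c) * (b - d) := by by_contra! hh; nlinarith
      constructor <;> intro <;> linarith
  rcases mul_eq_zero.1 h3 with rfl | rfl
  · left
    have h4 : a * d = 1 := by linarith
    rcases Int.eq_one_or_neg_one_of_mul_eq_one' h4 with ⟨rfl, rfl⟩ | ⟨rfl, rfl⟩ <;> simp at hne ⊢ <;> omega
  · right
    have h4 : b * (-c) = 1 := by linarith
    rcases Int.eq_one_or_neg_one_of_mul_eq_one' h4 with ⟨rfl, hc⟩ | ⟨rfl, hc⟩ <;>
      obtain rfl : c = _ := neg_eq_iff_eq_neg.1 hc <;> simp at hne ⊢ <;> omega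

lemma ai_S (h : SL(2,ℤ)) : ai (S⁻¹ * h) = ai h := by
  have : xq (S⁻¹ * h) = xq h := by
    have e : ((S⁻¹ : SL(2,ℤ)) : Matrix (Fin 2) (Fin 2) ℤ) = !![0, 1; -1, 0] := by decide
    simp [xq, Matrix.SpecialLinearGroup.coe_mul, e, Matrix.mul_apply, Fin.sum_univ_two, -Matrix.SpecialLinearGroup.coe_inv]; ring
  rw [ai, ai, this]

lemma ai_T (h : SL(2,ℤ)) (hh : ai (T⁻¹ * h) ≠ ai h) : h ∈ ({T, -T, S, -S} : Finset SL(2,ℤ)) := by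
  have h1 : xq (T⁻¹ * h) = (h 0 0 - h 1 0) * (h 0 1 - h 1 1) + h 1 0 * h 1 1 := by
    have e : ((T⁻¹ : SL(2,ℤ)) : Matrix (Fin 2) (Fin 2) ℤ) = !![1, -1; 0, 1] := by decide
    simp [xq, Matrix.SpecialLinearGroup.coe_mul, e, Matrix.mul_apply, Fin.sum_univ_two, -Matrix.SpecialLinearGroup.coe_inv]; ring
  have hd := h.det_coe
  rw [Matrix.det_fin_two] at hd
  have := arith (h 0 0) (h 0 1) (h 1 0) (h 1 1) hd (by
    intro hc
    apply hh
    rw [ai, ai, h1, xq]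
    simp only [hc])
  have hm : ∀ k : SL(2,ℤ), h 0 0 = k 0 0 → h 0 1 = k 0 1 → h 1 0 = k 1 0 → h 1 1 = k 1 1 → h = k := by
    intro k _ _ _ _
    ext i j; fin_cases i <;> fin_cases j <;> assumption
  simp only [Finset.mem_insert, Finset.mem_singleton]
  rcases this with ⟨h1, h2, h3, h4 | h4⟩ | ⟨h1, h2, h3, h4 | h4⟩
  · left; apply hm <;> simp only [h1, h2, h3, h4] <;> decide
  · right; left; apply hm <;> simp only [h1, h2, h3, h4] <;> decide
  · right; right; right; apply hm <;> simp only [h1, h2, h3, h4] <;> decide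
  · right; right; left; apply hm <;> simp only [h1, h2, h3, h4] <;> decide

lemma ai_fin (g : SL(2,ℤ)) : {h | ai (g⁻¹ * h) ≠ ai h}.Finite := by
  have hg : g ∈ Subgroup.closure {S, T} := by simp [SpecialLinearGroup.SL2Z_generators]
  induction hg using Subgroup.closure_induction with
  | mem x hx =>
    rcases hx with rfl | rfl
    · simp [ai_S]
    · exact Set.Finite.subset (Finset.finite_toSet _) ai_T
  | one => simp
  | mul x y _ _ hx hy =>
    have hy' := hy.preimage (f := fun h => x⁻¹ * h) (mul_right_injective x⁻¹).injOn
    refine (hx.union hy').subset fun h hh => ?_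
    by_contra hc
    simp only [Set.mem_union, Set.mem_preimage, Set.mem_ofPred_eq, not_or, not_not] at hc
    apply hh
    rw [_root_.mul_inv_rev, mul_assoc, hc.2, hc.1]
  | inv x _ hx =>
    have hx' := hx.preimage (f := fun h => x * h) (mul_right_injective x).injOn
    refine hx'.subset fun h hh => ?_
    simpa using hh.symm

/-- the explicit cocycle -/
noncomputable def Dc (m : Matrix (Fin 2) (Fin 2) ℂ) (g : SL(2,ℤ)) : Matrix (Fin 2) (Fin 2) ℂ :=
  ∑ᶠ h, (ai (g⁻¹ * h) - ai h) • cj h m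

lemma Dc_supp (m) (g : SL(2,ℤ)) :
    (Function.support fun h => (ai (g⁻¹ * h) - ai h) • cj h m).Finite := by
  refine (ai_fin g).subset fun h hh hc => hh ?_
  simp [hc]

lemma Dc_coc (m) : IsCoc (Dc m) := by
  intro g k
  have h1 : cj g (Dc m k) = ∑ᶠ h, (ai (k⁻¹ * (g⁻¹ * h)) - ai (g⁻¹ * h)) • cj h m := by
    rw [Dc, map_finsum _ (Dc_supp m k)]
    rw [← finsum_comp_equiv (f := fun h => (ai (k⁻¹ * (g⁻¹ * h)) - ai (g⁻¹ * h)) • cj h m)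
      (Equiv.mulLeft g)]
    simp [cj_mul]
  have hf : (Function.support fun h => (ai (k⁻¹ * (g⁻¹ * h)) - ai (g⁻¹ * h)) • cj h m).Finite := by
    refine ((ai_fin k).preimage (f := fun h => g⁻¹ * h) (mul_right_injective g⁻¹).injOn).subset
      fun h hh hc => hh ?_
    simp [hc]
  rw [h1, Dc, Dc, ← finsum_add_distrib hf (Dc_supp m g)]
  refine finsum_congr fun h => ?_
  rw [_root_.mul_inv_rev, mul_assoc, ← add_smul]
  congr 1; ring

lemma cj_neg (g : SL(2,ℤ)) (X) : cj (-g) X = cj g X := by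
  rw [cj_apply, cm_inv, cj_apply, cm_inv]
  ext i j; fin_cases i <;> fin_cases j <;> simp [cm, Matrix.mul_apply, Fin.sum_univ_two] <;> ring

lemma Dc_T : Dc !![0, 1; 0, 0] T 1 0 = -2 := by
  rw [Dc, finsum_eq_sum_of_support_subset (s := {T, -T, S, -S})]
  · rw [Finset.sum_insert (by decide), Finset.sum_insert (by decide),
      Finset.sum_insert (by decide), Finset.sum_singleton]
    have e : ∀ h : SL(2,ℤ), ai (-h) = ai h := fun h => by
      have : xq (-h) = xq h := by simp [xq]
      rw [ai, ai, this]
    have e1 : ai (T⁻¹ * T) = 0 := if_neg (by decide)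
    have e2 : ai T = 1 := if_pos (by decide)
    have e3 : ai (T⁻¹ * S) = 1 := if_pos (by decide)
    have e4 : ai S = 0 := if_neg (by decide)
    simp only [mul_neg, e, e1, e2, e3, e4, cj_neg]
    simp [cj_S, cj_T]
    norm_num
  · intro h hh
    exact ai_T h fun hc => hh (by simp [hc])

/-- The coefficient module. -/
noncomputable abbrev AV : Rep ℂ SL(2,ℤ) := (ihom Vstd).obj Vstd

/-- Matrix of an endomorphism. -/
noncomputable def mtx : AV ≃ₗ[ℂ] Matrix (Fin 2) (Fin 2) ℂ :=
  (LinearMap.toMatrix' : ((Fin 2 → ℂ) →ₗ[ℂ] (Fin 2 → ℂ)) ≃ₗ[ℂ] Matrix (Fin 2) (Fin 2) ℂ)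

lemma stdRep_mt (g : SL(2,ℤ)) : LinearMap.toMatrix' (stdRep g) = cm g := by
  have : stdRep g = Matrix.toLin' (cm g) := by
    refine LinearMap.ext fun v => ?_
    have h : cm g = (Matrix.SpecialLinearGroup.map (Int.castRingHom ℂ) g).1 := by
      ext i j; fin_cases i <;> fin_cases j <;> simp [cm]
    rw [h]
    rfl
  rw [this, LinearMap.toMatrix'_toLin']

lemma mt_rho (g : SL(2,ℤ)) (x : AV) : mtx (AV.ρ g x) = cj g (mtx x) := by
  have : AV.ρ g x = (stdRep g ∘ₗ (show (Fin 2 → ℂ) →ₗ[ℂ] (Fin 2 → ℂ) from x) ∘ₗ stdRep g⁻¹ :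
    (Fin 2 → ℂ) →ₗ[ℂ] (Fin 2 → ℂ)) := rfl
  rw [this, cj_apply, ← stdRep_mt, ← stdRep_mt]
  simp only [mtx]
  erw [LinearMap.toMatrix'_comp, LinearMap.toMatrix'_comp]
  rfl

open groupCohomology in
/-- The functional detecting classes. -/
noncomputable def lam : cocycles₁ AV →ₗ[ℂ] ℂ where
  toFun D := mtx (D T) 1 0
  map_add' D E := by
    change mtx (D T + E T) 1 0 = _
    rw [map_add]; rfl
  map_smul' r D := by
    change mtx (r • D T) 1 0 = _
    rw [map_smul]; rfl

open groupCohomology in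
lemma lam_ker (D : cocycles₁ AV) : lam D = 0 ↔ H1π AV D = 0 := by
  rw [H1π_eq_zero_iff]
  constructor
  · intro h
    have hc : IsCoc (fun g => mtx (D g)) := fun g k => by
      have := (mem_cocycles₁_iff (A := AV) D).1 D.2 g k
      change mtx (D (g * k)) = cj g (mtx (D k)) + mtx (D g)
      rw [this, map_add, mt_rho]
    obtain ⟨X, hX⟩ := hc.upper h
    refine ⟨mtx.symm X, funext fun g => mtx.injective ?_⟩
    rw [hX]
    change mtx (AV.ρ g (mtx.symm X) - mtx.symm X) = _
    rw [map_sub, mt_rho, LinearEquiv.apply_symm_apply]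
  · rintro ⟨x, hx⟩
    have hT : D T = AV.ρ T x - x := (congrFun hx T).symm
    change mtx (D T) 1 0 = 0
    rw [hT, map_sub, mt_rho, cj_T]
    simp

open groupCohomology in
lemma lam_surj : Function.Surjective lam := by
  have hne : lam ≠ 0 := by
    intro h0
    let D : cocycles₁ AV := ⟨fun g => mtx.symm (Dc !![0, 1; 0, 0] g), by
      rw [mem_cocycles₁_iff]
      intro g k
      apply mtx.injective
      rw [map_add, mt_rho]
      simp only [LinearEquiv.apply_symm_apply]
      exact Dc_coc _ g k⟩
    have h1 : lam D = -2 := by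
      change mtx (mtx.symm (Dc !![0, 1; 0, 0] T)) 1 0 = -2
      rw [LinearEquiv.apply_symm_apply, Dc_T]
    rw [h0] at h1
    norm_num at h1
  exact LinearMap.surjective hne

open groupCohomology in
lemma H1_iso : Nonempty (H1 AV ≅ ModuleCat.of ℂ ℂ) := by
  have hs : Function.Surjective (H1π AV).hom := (ModuleCat.epi_iff_surjective _).1 inferInstance
  have hk : LinearMap.ker (H1π AV).hom = LinearMap.ker lam := by
    ext D
    exact (lam_ker D).symm
  exact ⟨(((H1π AV).hom.quotKerEquivOfSurjective hs).symm ≪≫ₗ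
    Submodule.quotEquivOfEq _ _ hk ≪≫ₗ lam.quotKerEquivOfSurjective lam_surj).toModuleIso⟩

end helpers

/-- `Ext¹_{ℂG}(V, V) ≅ ℂ` for `G = SL(2,ℤ)` and `V` the standard 2-dimensional
`ℂG`-module. -/
theorem stmt19 :
    Nonempty
      ((((Ext ℂ (Rep ℂ (Matrix.SpecialLinearGroup (Fin 2) ℤ)) 1).obj
          (Opposite.op Vstd)).obj Vstd) ≅ ModuleCat.of ℂ ℂ) := by
  obtain ⟨e⟩ := H1_iso
  exact ⟨extIso Vstd Vstd 1 ≪≫ e⟩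
end
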